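/- Let (G,I) be a 3-transposition group and B(G) = ⊕_{i∈I} ℂ x^i with product x^i·x^i = 2x^i, x^i·x^j = (1/4)(x^i + x^j − x^{i∘j}) when i ∼ j (where i∘j = iji), and x^i·x^j = 0 otherwise; and bilinear form (x^i|x^i) = 1/4, (x^i|x^j) = 1/32 if i ∼ j, and 0 otherwise. Then the bilinear form is invariant: (a·b | c) = (a | b·c) for all a,b,c ∈ B(G). -/

import Mathlib

/-!
Write `i ◃ j = i j i⁻¹` for the conjugation quandle on `I`, so that `i ∼ j` means `i ◃ j ≠ j`, and
let `τᵢ` be the symmetry `xʲ ↦ x^{i ◃ j}`. The three cases of the Matsuo product combine into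
`xⁱ · y = e r (y - τᵢ y) + r (xⁱ | y) xⁱ`, where `d = 1/4` and `e = 1/32` are the nonzero values of
the form and `r = 8`. As `τᵢ` is an involutive isometry of the form, multiplication by `xⁱ` is a
combination of self-adjoint operators, and together with commutativity this is the invariance.
-/

theorem exists_linearMap₂_of_eq_sum {k ι M : Type*} [CommSemiring k] [AddCommMonoid M] [Module k M]
    [Fintype ι] {P : ι → ι → M} {B : (ι → k) → (ι → k) → M}
    (hB : ∀ f g, B f g = ∑ i, ∑ j, (f i * g j) • P i j) :
    ∃ L : (ι → k) →ₗ[k] (ι → k) →ₗ[k] M, (∀ f g, B f g = L f g) ∧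
      ∀ i j, L (Pi.basisFun k ι i) (Pi.basisFun k ι j) = P i j := by
  classical
  refine ⟨Fintype.linearCombination k fun i ↦ Fintype.linearCombination k (P i),
    fun f g ↦ ?_, fun i j ↦ ?_⟩
  · simp only [hB, Fintype.linearCombination_apply, LinearMap.sum_apply, LinearMap.smul_apply,
      Finset.smul_sum, mul_smul]
  · simp only [Pi.basisFun_apply, Fintype.linearCombination_apply_single, one_smul]

section ThreeTranspositionQuandle

open scoped Quandles

/-- A 3-transposition quandle: the quandle abstracted from conjugation `i ◃ j = i j i⁻¹` on the
transpositions of a 3-transposition group. Since `i ◃ j = j` says that `i j` has order at most `2`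
and `i ◃ j = j ◃ i` that its cube is `1`, the relation `i ∼ j` is encoded as `i ◃ j ≠ j`. -/
structure IsThreeTranspositionQuandle (Q : Type*) [Quandle Q] : Prop where
  isInvolutory : Rack.IsInvolutory Q
  act_eq_or_act_comm (i j : Q) : i ◃ j = j ∨ i ◃ j = j ◃ i

namespace IsThreeTranspositionQuandle

variable {Q : Type*} [Quandle Q]

theorem act_comm_of_act_ne (hQ : IsThreeTranspositionQuandle Q) {i j : Q} (h : i ◃ j ≠ j) :
    i ◃ j = j ◃ i :=
  (hQ.act_eq_or_act_comm i j).resolve_left h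

theorem act_eq_symm (hQ : IsThreeTranspositionQuandle Q) {i j : Q} (h : i ◃ j = j) :
    j ◃ i = i := by
  refine (hQ.act_eq_or_act_comm j i).elim id fun hcomm ↦ ?_
  have hij : i = j := by rw [← Rack.left_cancel j, hcomm, h, Quandle.fix]
  rw [hij, Quandle.fix]

end IsThreeTranspositionQuandle

end ThreeTranspositionQuandle

section MatsuoAlgebra

open scoped Quandles

variable {k A Q : Type*} [CommRing k] [AddCommGroup A] [Module k A] [Quandle Q]

/-- The bilinear form of a Matsuo algebra with axes `x i`: the axes have norm `d`, and distinct axes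
pair to `e` if `i ∼ j`, that is `i ◃ j ≠ j`, and to `0` otherwise. -/
structure IsMatsuoForm (d e : k) (x : Q → A) (form : LinearMap.BilinForm k A) : Prop where
  self (i : Q) : form (x i) (x i) = d
  of_act_ne {i j : Q} (h : i ◃ j ≠ j) : form (x i) (x j) = e
  of_act_eq {i j : Q} (hne : i ≠ j) (h : i ◃ j = j) : form (x i) (x j) = 0

/-- The product of a Matsuo algebra with axes `x i`: `s` is the eigenvalue of an axis on itself, and
`q` is the structure constant of the products of axes with `i ∼ j`, that is `i ◃ j ≠ j`. -/
structure IsMatsuoProduct (s q : k) (x : Q → A) (mul : A →ₗ[k] A →ₗ[k] A) : Prop where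
  self (i : Q) : mul (x i) (x i) = s • x i
  of_act_ne {i j : Q} (h : i ◃ j ≠ j) : mul (x i) (x j) = q • (x i + x j - x (i ◃ j))
  of_act_eq {i j : Q} (hne : i ≠ j) (h : i ◃ j = j) : mul (x i) (x j) = 0

variable {d e r s q : k} {x : Q → A} {form : LinearMap.BilinForm k A} {mul : A →ₗ[k] A →ₗ[k] A}

namespace IsMatsuoForm

theorem of_apply_eq_ite [DecidableEq Q] {adj : Q → Q → Prop} [DecidableRel adj]
    (hadj : ∀ i j, adj i j ↔ i ◃ j ≠ j)
    (h : ∀ i j, form (x i) (x j) = if i = j then d else if adj i j then e else 0) :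
    IsMatsuoForm d e x form where
  self i := by rw [h, if_pos rfl]
  of_act_ne {i j} hact := by
    have hne : i ≠ j := by rintro rfl; exact hact Quandle.fix
    rw [h, if_neg hne, if_pos ((hadj i j).mpr hact)]
  of_act_eq {i j} hne hact := by rw [h, if_neg hne, if_neg (mt (hadj i j).mp (not_not.mpr hact))]

theorem apply_comm (hform : IsMatsuoForm d e x form) (hQ : IsThreeTranspositionQuandle Q)
    (i j : Q) : form (x i) (x j) = form (x j) (x i) := by
  rcases eq_or_ne i j with rfl | hne
  · rfl
  by_cases h : i ◃ j = j
  · rw [hform.of_act_eq hne h, hform.of_act_eq hne.symm (hQ.act_eq_symm h)]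
  · rw [hform.of_act_ne h, hform.of_act_ne (mt hQ.act_eq_symm h)]

theorem apply_act_act (hform : IsMatsuoForm d e x form) (l i j : Q) :
    form (x (l ◃ i)) (x (l ◃ j)) = form (x i) (x j) := by
  have act_iff : (l ◃ i) ◃ (l ◃ j) = l ◃ j ↔ i ◃ j = j := by
    rw [← Shelf.self_distrib, Rack.left_cancel]
  rcases eq_or_ne i j with rfl | hne
  · rw [hform.self, hform.self]
  by_cases h : i ◃ j = j
  · rw [hform.of_act_eq hne h, hform.of_act_eq (mt (Rack.left_cancel l).mp hne) (act_iff.mpr h)]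
  · rw [hform.of_act_ne h, hform.of_act_ne (mt act_iff.mp h)]

theorem apply_act_left (hform : IsMatsuoForm d e x form) (hQ : Rack.IsInvolutory Q)
    (l i j : Q) : form (x (l ◃ i)) (x j) = form (x i) (x (l ◃ j)) := by
  rw [← hform.apply_act_act l i, hQ l j]

end IsMatsuoForm

namespace IsMatsuoProduct

theorem of_apply_eq_ite [DecidableEq Q] {adj : Q → Q → Prop} [DecidableRel adj]
    (hadj : ∀ i j, adj i j ↔ i ◃ j ≠ j)
    (h : ∀ i j, mul (x i) (x j) =
      if i = j then s • x i else if adj i j then q • (x i + x j - x (i ◃ j)) else 0) :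
    IsMatsuoProduct s q x mul where
  self i := by rw [h, if_pos rfl]
  of_act_ne {i j} hact := by
    have hne : i ≠ j := by rintro rfl; exact hact Quandle.fix
    rw [h, if_neg hne, if_pos ((hadj i j).mpr hact)]
  of_act_eq {i j} hne hact := by rw [h, if_neg hne, if_neg (mt (hadj i j).mp (not_not.mpr hact))]

theorem apply_comm (hmul : IsMatsuoProduct s q x mul) (hQ : IsThreeTranspositionQuandle Q)
    (i j : Q) : mul (x i) (x j) = mul (x j) (x i) := by
  rcases eq_or_ne i j with rfl | hne
  · rfl
  by_cases h : i ◃ j = j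
  · rw [hmul.of_act_eq hne h, hmul.of_act_eq hne.symm (hQ.act_eq_symm h)]
  · rw [hmul.of_act_ne h, hmul.of_act_ne (mt hQ.act_eq_symm h), hQ.act_comm_of_act_ne h,
      add_comm (x i)]

theorem apply_eq_smul_sub_add_smul (hmul : IsMatsuoProduct (r * d) (r * e) x mul)
    (hform : IsMatsuoForm d e x form) (i j : Q) :
    mul (x i) (x j) = (r * e) • (x j - x (i ◃ j)) + (r * form (x i) (x j)) • x i := by
  rcases eq_or_ne i j with rfl | hne
  · rw [hmul.self, hform.self, Quandle.fix, sub_self, smul_zero, zero_add]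
  by_cases h : i ◃ j = j
  · rw [hmul.of_act_eq hne h, hform.of_act_eq hne h, h, sub_self, smul_zero, mul_zero, zero_smul,
      add_zero]
  · rw [hmul.of_act_ne h, hform.of_act_ne h, ← smul_add, sub_add_eq_add_sub, add_comm (x j)]

theorem form_mul_assoc (hmul : IsMatsuoProduct (r * d) (r * e) x mul)
    (hform : IsMatsuoForm d e x form) (hQ : IsThreeTranspositionQuandle Q) (i j l : Q) :
    form (mul (x i) (x j)) (x l) = form (x i) (mul (x j) (x l)) := by
  rw [hmul.apply_comm hQ i j, hmul.apply_eq_smul_sub_add_smul hform,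
    hmul.apply_eq_smul_sub_add_smul hform]
  simp only [map_add, map_sub, map_smul, LinearMap.add_apply, LinearMap.sub_apply,
    LinearMap.smul_apply, smul_eq_mul]
  rw [hform.apply_act_left hQ.isInvolutory, hform.apply_comm hQ j i]
  ring

end IsMatsuoProduct

theorem stmt_3_general (hQ : IsThreeTranspositionQuandle Q)
    (hspan : Submodule.span k (Set.range x) = ⊤) (hform : IsMatsuoForm d e x form)
    (hmul : IsMatsuoProduct (r * d) (r * e) x mul) (a b c : A) :
    form (mul a b) c = form a (mul b c) := by
  let mulForm : A →ₗ[k] A →ₗ[k] A →ₗ[k] k := mul.compr₂ form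
  let formMul : A →ₗ[k] A →ₗ[k] A →ₗ[k] k :=
    LinearMap.lcomp k (A →ₗ[k] k) mul ∘ₗ LinearMap.llcomp k A A k ∘ₗ form
  have mulForm_eq : mulForm = formMul :=
    LinearMap.ext_on_range hspan fun i ↦ LinearMap.ext_on_range hspan fun j ↦
      LinearMap.ext_on_range hspan fun l ↦ hmul.form_mul_assoc hform hQ i j l
  exact congr($mulForm_eq a b c)

end MatsuoAlgebra

section ThreeTranspositionGroup

variable {G : Type*} [Group G] {a b : G}

theorem exists_pow_commute_of_finite_conjugatesOf (ha : (conjugatesOf a).Finite) (g : G) :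
    ∃ n, 0 < n ∧ Commute (g ^ n) a := by
  have hindex : (MulAction.stabilizer (ConjAct G) a).index ≠ 0 := by
    rw [MulAction.index_stabilizer, ConjAct.orbit_eq_carrier_conjClasses]
    exact Set.ncard_ne_zero_of_mem (a := a) mem_conjugatesOf_self ha
  obtain ⟨n, hn, -, hmem⟩ :=
    Subgroup.exists_pow_mem_of_index_ne_zero hindex (ConjAct.toConjAct g)
  exact ⟨n, hn, mul_inv_eq_iff_eq_mul.mp hmem⟩

theorem isOfFinOrder_mul_of_finite_conjugatesOf (ha : a * a = 1) (hb : b * b = 1)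
    (hfin : (conjugatesOf a).Finite) : IsOfFinOrder (a * b) := by
  obtain ⟨n, hn, hcomm⟩ := exists_pow_commute_of_finite_conjugatesOf hfin (a * b)
  have hconj : a * (a * b) * a⁻¹ = (a * b)⁻¹ := by
    rw [mul_inv_rev, inv_eq_of_mul_eq_one_right ha, inv_eq_of_mul_eq_one_right hb, ← mul_assoc a,
      ha, one_mul]
  have hinv : (a * b) ^ n = ((a * b) ^ n)⁻¹ := by
    rw [← inv_pow, ← hconj, conj_pow, ← hcomm.eq, mul_inv_cancel_right]
  refine isOfFinOrder_iff_pow_eq_one.mpr ⟨n + n, by lia, ?_⟩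
  rw [pow_add, mul_eq_one_iff_eq_inv, ← hinv]

theorem conj_eq_iff_mul_pow_two (ha : a * a = 1) (hb : b * b = 1) :
    a * b * a⁻¹ = b ↔ (a * b) ^ 2 = 1 := by
  rw [pow_two, mul_eq_one_iff_eq_inv, mul_inv_rev, inv_eq_of_mul_eq_one_right ha,
    inv_eq_of_mul_eq_one_right hb, ← mul_inv_eq_iff_eq_mul, inv_eq_of_mul_eq_one_right ha]

theorem conj_eq_conj_iff_mul_pow_three (ha : a * a = 1) (hb : b * b = 1) :
    a * b * a⁻¹ = b * a * b⁻¹ ↔ (a * b) ^ 3 = 1 := by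
  have hpow : (a * b) ^ 3 = a * b * a * (b * a * b) := by
    simp only [pow_succ, pow_zero, one_mul, mul_assoc]
  rw [hpow, mul_eq_one_iff_eq_inv, mul_inv_rev, mul_inv_rev, inv_eq_of_mul_eq_one_right ha,
    inv_eq_of_mul_eq_one_right hb, ← mul_assoc]

/-- The set `I` of transpositions of a 3-transposition group: it is conjugation-invariant, its
elements square to `1` and their pairwise products have order `1`, `2` or `3`. The set need not
generate `G` and may contain `1`. Since `orderOf` is `0` on elements of infinite order, finiteness
of the orders is a separate field. -/
structure IsThreeTranspositionSet (I : Set G) : Prop where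
  conj_mem (g : G) {a : G} (ha : a ∈ I) : g * a * g⁻¹ ∈ I
  mul_self {a : G} (ha : a ∈ I) : a * a = 1
  isOfFinOrder_mul {a b : G} (ha : a ∈ I) (hb : b ∈ I) : IsOfFinOrder (a * b)
  orderOf_mul_le {a b : G} (ha : a ∈ I) (hb : b ∈ I) : orderOf (a * b) ≤ 3

namespace IsThreeTranspositionSet

open scoped Quandles

variable {I : Set G}

theorem of_finite (hfin : I.Finite) (hinv : ∀ a ∈ I, a * a = 1)
    (hconj : ∀ g : G, ∀ a ∈ I, g * a * g⁻¹ ∈ I)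
    (hord : ∀ a ∈ I, ∀ b ∈ I, orderOf (a * b) ≤ 3) : IsThreeTranspositionSet I where
  conj_mem g a ha := hconj g a ha
  mul_self {a} ha := hinv a ha
  isOfFinOrder_mul {a b} ha hb := by
    refine isOfFinOrder_mul_of_finite_conjugatesOf (hinv a ha) (hinv b hb) (hfin.subset ?_)
    rintro _ hg
    obtain ⟨g, rfl⟩ := isConj_iff.mp hg
    exact hconj g a ha
  orderOf_mul_le {a b} ha hb := hord a ha b hb

/-- The quandle structure `a ◃ b = a * b * a⁻¹` on `I`, as a subquandle of `Quandle.Conj G`. -/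
abbrev quandle (hI : IsThreeTranspositionSet I) : Quandle I where
  act a b := ⟨(a : G) * b * (a : G)⁻¹, hI.conj_mem a b.2⟩
  self_distrib {a b c} := Subtype.ext (Shelf.self_distrib (α := Quandle.Conj G))
  invAct a b := ⟨(a : G)⁻¹ * b * a, by simpa using hI.conj_mem (a : G)⁻¹ b.2⟩
  left_inv a b := Subtype.ext (Rack.left_inv (α := Quandle.Conj G) a b)
  right_inv a b := Subtype.ext (Rack.right_inv (α := Quandle.Conj G) a b)
  fix {a} := Subtype.ext (mul_inv_cancel_right _ _)

theorem coe_act (hI : IsThreeTranspositionSet I) (i j : I) :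
    (hI.quandle.act i j : G) = i * j * i :=
  congrArg ((i : G) * j * ·) (inv_eq_of_mul_eq_one_right (hI.mul_self i.2))

theorem orderOf_mul_eq_three_iff_act_ne (hI : IsThreeTranspositionSet I) (i j : I) :
    orderOf (i * j : G) = 3 ↔ hI.quandle.act i j ≠ j := by
  have act_eq_iff : hI.quandle.act i j = j ↔ orderOf (i * j : G) ∣ 2 := by
    rw [orderOf_dvd_iff_pow_eq_one, ← conj_eq_iff_mul_pow_two (hI.mul_self i.2) (hI.mul_self j.2)]
    exact Subtype.ext_iff
  rw [Ne, act_eq_iff]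
  have hpos := (hI.isOfFinOrder_mul i.2 j.2).orderOf_pos
  have hle := hI.orderOf_mul_le i.2 j.2
  interval_cases orderOf (i * j : G) <;> decide

theorem isThreeTranspositionQuandle (hI : IsThreeTranspositionSet I) :
    @IsThreeTranspositionQuandle I hI.quandle :=
  let _ := hI.quandle
  { isInvolutory := fun i j ↦ Subtype.ext <| by
      rw [hI.coe_act, hI.coe_act]
      simp only [mul_assoc, hI.mul_self i.2, mul_one]
      rw [← mul_assoc, hI.mul_self i.2, one_mul]
    act_eq_or_act_comm := fun i j ↦ or_iff_not_imp_left.mpr fun hne ↦ Subtype.ext <| by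
      have horder := (hI.orderOf_mul_eq_three_iff_act_ne i j).mpr hne
      exact (conj_eq_conj_iff_mul_pow_three (hI.mul_self i.2) (hI.mul_self j.2)).mpr
        (horder ▸ pow_orderOf_eq_one _) }

end IsThreeTranspositionSet

end ThreeTranspositionGroup

/-- Let `(G, I)` be a 3-transposition group with `I` finite, and let `B(G) = ⊕_{i ∈ I} ℂ xⁱ`
be the Matsuo algebra, with product `xⁱ·xⁱ = 2xⁱ`, `xⁱ·xʲ = (1/4)(xⁱ + xʲ - x^{i∘j})` when
`i ∼ j` (i.e. `orderOf (i*j) = 3`, where `i∘j = iji`), and `xⁱ·xʲ = 0` otherwise; with bilinear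
form `(xⁱ|xⁱ) = 1/4`, `(xⁱ|xʲ) = 1/32` if `i ∼ j`, and `0` otherwise.  Then the bilinear form
is invariant: `(a·b | c) = (a | b·c)` for all `a, b, c ∈ B(G)`. -/
theorem stmt_3 {G : Type*} [Group G] [DecidableEq G] (I : Set G) [Fintype I]
    (hinv : ∀ a ∈ I, a * a = 1 ∧ a ≠ 1)
    (hgen : Subgroup.closure I = ⊤)
    (hconj : ∀ g : G, ∀ a ∈ I, g * a * g⁻¹ ∈ I)
    (hord : ∀ a ∈ I, ∀ b ∈ I, orderOf (a * b) ≤ 3)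
    (circ : I → I → I) (hcirc : ∀ i j : I, (circ i j : G) = (i : G) * j * i)
    (mul : (I → ℂ) → (I → ℂ) → (I → ℂ))
    (hmul : ∀ f g : I → ℂ, mul f g = ∑ i : I, ∑ j : I, (f i * g j) •
      (if i = j then ((2 : ℂ) • (Pi.single i (1 : ℂ) : I → ℂ))
       else if orderOf ((i : G) * (j : G)) = 3 then
         ((4 : ℂ)⁻¹ • ((Pi.single i (1 : ℂ) : I → ℂ) + (Pi.single j (1 : ℂ) : I → ℂ) - (Pi.single (circ i j) (1 : ℂ) : I → ℂ)))
       else (0 : I → ℂ)))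
    (form : (I → ℂ) → (I → ℂ) → ℂ)
    (hform : ∀ f g : I → ℂ, form f g = ∑ i : I, ∑ j : I, f i * g j *
      (if i = j then (4 : ℂ)⁻¹
       else if orderOf ((i : G) * (j : G)) = 3 then (32 : ℂ)⁻¹ else 0)) :
    ∀ a b c : I → ℂ, form (mul a b) c = form a (mul b c) := by
  have hI := IsThreeTranspositionSet.of_finite I.toFinite (fun a ha ↦ (hinv a ha).1) hconj hord
  let _ := hI.quandle
  have hact (i j : I) : circ i j = Shelf.act i j :=
    Subtype.ext ((hcirc i j).trans (hI.coe_act i j).symm)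
  obtain ⟨formB, form_eq, formB_basis⟩ := exists_linearMap₂_of_eq_sum hform
  obtain ⟨mulB, mul_eq, mulB_basis⟩ := exists_linearMap₂_of_eq_sum hmul
  have hmatsuoForm : IsMatsuoForm 4⁻¹ 32⁻¹ (Pi.basisFun ℂ I) formB :=
    .of_apply_eq_ite hI.orderOf_mul_eq_three_iff_act_ne formB_basis
  have hmatsuoProduct : IsMatsuoProduct (8 * 4⁻¹) (8 * 32⁻¹) (Pi.basisFun ℂ I) mulB := by
    refine .of_apply_eq_ite hI.orderOf_mul_eq_three_iff_act_ne fun i j ↦ ?_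
    rw [mulB_basis, hact]
    norm_num [Pi.basisFun_apply]
  intro a b c
  rw [mul_eq, mul_eq, form_eq, form_eq]
  exact stmt_3_general hI.isThreeTranspositionQuandle (Pi.basisFun ℂ I).span_eq hmatsuoForm
    hmatsuoProduct a b c
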